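/- Let n ≥ 1, 1 ≤ q ≤ n, let Ω ⊆ ℂⁿ be a bounded open set and D > 0 a constant with |z|² ≤ D for all z in the closure of Ω. Let ρ be a real-valued C² function on an open neighborhood of the closure of Ω with ρ < 0 on Ω, and assume that i∂∂̄ρ(u,u)(z) ≥ 0 for every z in the closure of Ω and every (0,q)-coefficient system u. Fix s ∈ (0,1), set K := (1−s)/(2Dns) and r(z) := e^{−K|z|²} ρ(z). Then for every z ∈ Ω and every (0,q)-coefficient system u: i∂∂̄(−(−r)^s)(u,u)(z) ≥ ((1−s)q/(4Dn)) · (−r(z))^s · |u|². -/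

import Mathlib

open scoped BigOperators
open MeasureTheory

namespace HM

/-- The finset of strictly increasing multi-indices of length `q` with entries in `Fin n`. -/
def Incr (n q : ℕ) : Finset (Fin q → Fin n) :=
  Finset.univ.filter (fun I => ∀ a b : Fin q, a < b → I a < I b)

/-- Prepend the index `k` to a `(q-1)`-tuple `J`, giving the `q`-tuple `kJ`. -/
def cons' {n : ℕ} (q : ℕ) (k : Fin n) (J : Fin (q - 1) → Fin n) : Fin q → Fin n :=
  fun i => if h : (i : ℕ) = 0 then k else J ⟨(i : ℕ) - 1, by have := i.isLt; omega⟩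

/-- A (0,q)-coefficient system: an antisymmetric assignment of complex numbers to q-tuples
(hence vanishing on tuples with a repeated index). -/
def IsCoeff {n q : ℕ} (u : (Fin q → Fin n) → ℂ) : Prop :=
  ∀ (σ : Equiv.Perm (Fin q)) (I : Fin q → Fin n),
    u (I ∘ σ) = ((Equiv.Perm.sign σ : ℤ) : ℂ) * u I

/-- `|u|²`, the sum of `|u_I|²` over strictly increasing multi-indices `I`. -/
noncomputable def nSq {n q : ℕ} (u : (Fin q → Fin n) → ℂ) : ℝ :=
  ∑ I ∈ Incr n q, ‖u I‖ ^ 2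

/-- The Hessian form of a matrix `H` on coefficient systems:
`H(u,v) = Σ'_{|J|=q-1} Σ_{k,l} H_{lk} u_{lJ} conj(v_{kJ})`. -/
noncomputable def mForm {n : ℕ} (q : ℕ) (H : Matrix (Fin n) (Fin n) ℂ)
    (u v : (Fin q → Fin n) → ℂ) : ℂ :=
  ∑ J ∈ Incr n (q - 1), ∑ k : Fin n, ∑ l : Fin n,
    H l k * u (cons' q l J) * star (v (cons' q k J))

/-- `σ^I_J`: the sign of the permutation rearranging `I` into `J`; `0` if `J` is not a
rearrangement of `I` (in particular `0` if `I` has a repeated entry). -/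
def permSign {n p : ℕ} (I J : Fin p → Fin n) : ℤ :=
  if Function.Injective I then
    ∑ π : Equiv.Perm (Fin p), if J = I ∘ π then ((Equiv.Perm.sign π : ℤ)) else 0
  else 0

/-- The Wirtinger derivative `∂f/∂z_k` of a complex-valued function, via real Fréchet
derivatives: `½(∂f/∂x_k − i ∂f/∂y_k)`. -/
noncomputable def dz {n : ℕ} (f : (Fin n → ℂ) → ℂ) (k : Fin n) (z : Fin n → ℂ) : ℂ :=
  (1/2 : ℂ) * (fderiv ℝ f z (Pi.single k 1) - Complex.I * fderiv ℝ f z (Pi.single k Complex.I))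

/-- The Wirtinger derivative `∂f/∂z̄_k`: `½(∂f/∂x_k + i ∂f/∂y_k)`. -/
noncomputable def dzbar {n : ℕ} (f : (Fin n → ℂ) → ℂ) (k : Fin n) (z : Fin n → ℂ) : ℂ :=
  (1/2 : ℂ) * (fderiv ℝ f z (Pi.single k 1) + Complex.I * fderiv ℝ f z (Pi.single k Complex.I))

/-- The mixed Wirtinger Hessian `∂²f/∂z_l∂z̄_k` of a real-valued function. -/
noncomputable def hessW {n : ℕ} (f : (Fin n → ℂ) → ℝ) (l k : Fin n) (z : Fin n → ℂ) : ℂ :=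
  dz (fun w => dzbar (fun y => (f y : ℂ)) k w) l z

/-- The Hessian form `i∂∂̄f(u,u)(z) = Σ'_{|J|=q-1} Σ_{k,l} ∂²f/∂z_l∂z̄_k(z) u_{lJ} conj(u_{kJ})`. -/
noncomputable def hForm {n : ℕ} (q : ℕ) (f : (Fin n → ℂ) → ℝ)
    (u : (Fin q → Fin n) → ℂ) (z : Fin n → ℂ) : ℂ :=
  ∑ J ∈ Incr n (q - 1), ∑ k : Fin n, ∑ l : Fin n,
    hessW f l k z * u (cons' q l J) * star (u (cons' q k J))

/-- Coefficient of `∂̄u` on the `(q+1)`-tuple `M`: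
`(∂̄u)_M = Σ_k Σ'_{|J|=q} σ^{kJ}_M ∂u_J/∂z̄_k`. -/
noncomputable def dbarC {n : ℕ} (q : ℕ) (u : (Fin q → Fin n) → (Fin n → ℂ) → ℂ)
    (M : Fin (q + 1) → Fin n) (z : Fin n → ℂ) : ℂ :=
  ∑ k : Fin n, ∑ J ∈ Incr n q, ((permSign (cons' (q + 1) k J) M : ℤ) : ℂ) * dzbar (u J) k z

/-- Coefficient of `ϑu` on the `(q-1)`-tuple `J`: `(ϑu)_J = −Σ_l ∂u_{lJ}/∂z_l`. -/
noncomputable def thetaC {n : ℕ} (q : ℕ) (u : (Fin q → Fin n) → (Fin n → ℂ) → ℂ)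
    (J : Fin (q - 1) → Fin n) (z : Fin n → ℂ) : ℂ :=
  -∑ l : Fin n, dz (u (cons' q l J)) l z

/-- Pointwise `|∂̄u|²`. -/
noncomputable def dbarSq {n : ℕ} (q : ℕ) (u : (Fin q → Fin n) → (Fin n → ℂ) → ℂ)
    (z : Fin n → ℂ) : ℝ :=
  ∑ M ∈ Incr n (q + 1), ‖dbarC q u M z‖ ^ 2

/-- Pointwise `|ϑu|²`. -/
noncomputable def thetaSq {n : ℕ} (q : ℕ) (u : (Fin q → Fin n) → (Fin n → ℂ) → ℂ)
    (z : Fin n → ℂ) : ℝ :=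
  ∑ J ∈ Incr n (q - 1), ‖thetaC q u J z‖ ^ 2

/-- Remove the `i`-th entry of a `j`-tuple, giving a `(j-1)`-tuple. -/
def removeIdx {n j : ℕ} (I : Fin j → Fin n) (i : Fin j) : Fin (j - 1) → Fin n :=
  fun t => if (t : ℕ) < (i : ℕ) then I ⟨t, by have := t.isLt; omega⟩
    else I ⟨(t : ℕ) + 1, by have := t.isLt; omega⟩

/-- The increasing `j`-tuple listing a finset `S` (with default `d` out of range). -/
def sortedTuple {n : ℕ} (j : ℕ) (S : Finset (Fin n)) (d : Fin n) : Fin j → Fin n :=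
  fun t => (S.sort (· ≤ ·)).getD t d

end HM

/-!
Near a point of `Ω`, write `-(-r)^s = -exp (s (f + ψ))` with `f = log (-ρ)` and `ψ = -K|z|²`.
By the chain rule its Hessian form is `s(-r)^s` times
`-i∂∂̄f(u,u) - i∂∂̄ψ(u,u) - s · i∂(f + ψ) ∧ ∂̄(f + ψ)(u,u)`.
Here `-i∂∂̄f(u,u) = -ρ⁻¹ i∂∂̄ρ(u,u) + i∂f ∧ ∂̄f(u,u)`, whose first summand is nonnegative. Since
`s < 1`, the second one absorbs the cross terms of `∂(f + ψ) ∧ ∂̄(f + ψ)` and leaves a loss of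
`s/(1-s) · i∂ψ ∧ ∂̄ψ(u,u)`. By Cauchy–Schwarz this loss is at most `s/(1-s) K²|z|² q|u|²`, and the
choice of `K` makes it at most half of the gain `-i∂∂̄ψ(u,u) = K q|u|²`. The factor `q` appears
because an increasing `q`-tuple rearranges to some `lJ` in `q` ways, one for each of its
entries `l`.
-/

namespace HM

section MultiIndices

variable {n p q : ℕ}

lemma mem_Incr_iff_strictMono {I : Fin p → Fin n} : I ∈ Incr n p ↔ StrictMono I := by
  simp [Incr, StrictMono]

lemma cons'_succ (k : Fin n) (J : Fin p → Fin n) :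
    cons' (p + 1) k J = (Fin.cons k J : Fin (p + 1) → Fin n) := by
  funext i
  cases i using Fin.cases <;> simp [cons']

lemma bijOn_strictMono_comp_perm {α : Type*} [LinearOrder α] :
    Set.BijOn (fun x : (Fin p → α) × Equiv.Perm (Fin p) ↦ x.1 ∘ x.2)
      {x | StrictMono x.1} {I | Function.Injective I} := by
  refine ⟨fun x hx ↦ hx.injective.comp x.2.injective, ?_, fun I hI ↦ ?_⟩
  · rintro ⟨I, σ⟩ hI ⟨I', σ'⟩ hI' (h : I ∘ σ = I' ∘ σ')
    obtain rfl : I = I' := (StrictMono.range_inj hI hI').1 <| by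
      rw [← σ.surjective.range_comp I, h, σ'.surjective.range_comp]
    simpa using Equiv.ext fun i ↦ hI.injective (congrFun h i)
  · refine ⟨(I ∘ Tuple.sort I, (Tuple.sort I)⁻¹), ?_, by ext; simp⟩
    exact (Tuple.monotone_sort I).strictMono_of_injective
      (Function.Injective.comp hI (Tuple.sort I).injective)

lemma sum_eq_factorial_nsmul_sum_Incr {M : Type*} [AddCommMonoid M] {F : (Fin p → Fin n) → M}
    (hperm : ∀ (σ : Equiv.Perm (Fin p)) I, F (I ∘ σ) = F I)
    (hzero : ∀ I, ¬ Function.Injective I → F I = 0) :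
    ∑ I, F I = p.factorial • ∑ I ∈ Incr n p, F I := by
  calc ∑ I, F I = ∑ I with Function.Injective I, F I := by
        refine (Finset.sum_subset (Finset.subset_univ _) fun I _ hI ↦ hzero I ?_).symm
        simpa using hI
    _ = ∑ x ∈ Incr n p ×ˢ (Finset.univ : Finset (Equiv.Perm (Fin p))), F (x.1 ∘ x.2) := by
        have hbij : Set.BijOn (fun x : (Fin p → Fin n) × Equiv.Perm (Fin p) ↦ x.1 ∘ x.2)
            ↑(Incr n p ×ˢ (Finset.univ : Finset (Equiv.Perm (Fin p))))
            ↑({I | Function.Injective I} : Finset (Fin p → Fin n)) := by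
          convert bijOn_strictMono_comp_perm (p := p) (α := Fin n) using 1 <;>
            ext <;> simp [mem_Incr_iff_strictMono]
        exact (Finset.sum_nbij _ hbij.mapsTo hbij.injOn hbij.surjOn fun _ _ ↦ rfl).symm
    _ = p.factorial • ∑ I ∈ Incr n p, F I := by
        simp [Finset.sum_product, hperm, Fintype.card_perm, Finset.sum_nsmul]

lemma IsCoeff.norm_comp_perm {u : (Fin q → Fin n) → ℂ} (hu : IsCoeff u)
    (σ : Equiv.Perm (Fin q)) (I : Fin q → Fin n) : ‖u (I ∘ σ)‖ = ‖u I‖ := by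
  rw [hu σ I]
  rcases Int.units_eq_one_or (Equiv.Perm.sign σ) with h | h <;> simp [h]

lemma IsCoeff.eq_zero_of_not_injective {u : (Fin q → Fin n) → ℂ} (hu : IsCoeff u)
    {I : Fin q → Fin n} (hI : ¬ Function.Injective I) : u I = 0 := by
  obtain ⟨a, b, hab, hne⟩ := Function.not_injective_iff.1 hI
  have hswap : I ∘ Equiv.swap a b = I := by
    rw [Equiv.comp_swap_eq_update, hab, Function.update_eq_self, ← hab, Function.update_eq_self]
  have hneg := hu (Equiv.swap a b) I
  rw [hswap, Equiv.Perm.sign_swap hne] at hneg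
  simpa [self_eq_neg] using hneg

lemma IsCoeff.sum_norm_sq {u : (Fin q → Fin n) → ℂ} (hu : IsCoeff u) :
    ∑ I, ‖u I‖ ^ 2 = q.factorial * nSq u := by
  rw [nSq, ← nsmul_eq_mul]
  exact sum_eq_factorial_nsmul_sum_Incr (fun σ I ↦ by rw [hu.norm_comp_perm])
    fun I hI ↦ by simp [hu.eq_zero_of_not_injective hI]

lemma IsCoeff.cons {u : (Fin (p + 1) → Fin n) → ℂ} (hu : IsCoeff u) (l : Fin n) :
    IsCoeff fun J : Fin p → Fin n ↦ u (Fin.cons l J : Fin (p + 1) → Fin n) := by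
  intro σ J
  have hcons : (Fin.cons l (J ∘ σ) : Fin (p + 1) → Fin n) =
      (Fin.cons l J : Fin (p + 1) → Fin n) ∘ Equiv.Perm.decomposeFin.symm (0, σ) := by
    funext i
    cases i using Fin.cases <;> simp
  simp only [hcons, hu _ _, Equiv.Perm.decomposeFin.symm_sign, if_true, one_mul]

lemma IsCoeff.sum_norm_sq_cons' (hq : 1 ≤ q) {u : (Fin q → Fin n) → ℂ} (hu : IsCoeff u) :
    ∑ J ∈ Incr n (q - 1), ∑ l, ‖u (cons' q l J)‖ ^ 2 = q * nSq u := by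
  obtain ⟨p, rfl⟩ : ∃ p, q = p + 1 := ⟨q - 1, by omega⟩
  have hp : (p.factorial : ℝ) ≠ 0 := by positivity
  refine mul_left_cancel₀ hp ?_
  calc (p.factorial : ℝ) * ∑ J ∈ Incr n p, ∑ l, ‖u (cons' (p + 1) l J)‖ ^ 2
      = ∑ l, (p.factorial : ℝ) * nSq fun J : Fin p → Fin n ↦
          u (Fin.cons l J : Fin (p + 1) → Fin n) := by
        simp only [cons'_succ, nSq, ← Finset.mul_sum]
        rw [Finset.sum_comm]
    _ = ∑ l, ∑ J : Fin p → Fin n, ‖u (Fin.cons l J : Fin (p + 1) → Fin n)‖ ^ 2 := by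
        simp only [(hu.cons _).sum_norm_sq]
    _ = ∑ I, ‖u I‖ ^ 2 := by
        rw [← (Fin.consEquiv fun _ : Fin (p + 1) ↦ Fin n).sum_comp, Fintype.sum_prod_type]
        rfl
    _ = p.factorial * ((p + 1 : ℕ) * nSq u) := by
        rw [hu.sum_norm_sq, Nat.factorial_succ]
        push_cast
        ring

end MultiIndices

section RealDerivative

variable {E : Type*} [NormedAddCommGroup E] [NormedSpace ℝ E] {f : E → ℝ} {x : E}

lemma differentiableAt_ofReal (hf : DifferentiableAt ℝ f x) :
    DifferentiableAt ℝ (fun y ↦ (f y : ℂ)) x :=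
  Complex.ofRealCLM.differentiableAt.comp x hf

lemma fderiv_ofReal_apply (hf : DifferentiableAt ℝ f x) (v : E) :
    fderiv ℝ (fun y ↦ (f y : ℂ)) x v = fderiv ℝ f x v :=
  congrArg (· v) (Complex.ofRealCLM.hasFDerivAt.comp x hf.hasFDerivAt).fderiv

lemma eventually_differentiableAt (hf : ContDiffAt ℝ 2 f x) :
    ∀ᶠ y in nhds x, DifferentiableAt ℝ f y :=
  (hf.eventually (by simp)).mono fun _ h ↦ h.differentiableAt two_ne_zero

end RealDerivative

section Wirtinger

variable {n : ℕ} {z : Fin n → ℂ}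

lemma dz_congr {f g : (Fin n → ℂ) → ℂ} (h : f =ᶠ[nhds z] g) (k : Fin n) :
    dz f k z = dz g k z := by
  simp only [dz, h.fderiv_eq]

lemma dz_add {f g : (Fin n → ℂ) → ℂ} (hf : DifferentiableAt ℝ f z)
    (hg : DifferentiableAt ℝ g z) (k : Fin n) :
    dz (fun w ↦ f w + g w) k z = dz f k z + dz g k z := by
  simp only [dz, fderiv_fun_add hf hg, _root_.add_apply]
  ring

lemma dz_mul {f g : (Fin n → ℂ) → ℂ} (hf : DifferentiableAt ℝ f z)
    (hg : DifferentiableAt ℝ g z) (k : Fin n) :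
    dz (fun w ↦ f w * g w) k z = dz f k z * g z + f z * dz g k z := by
  simp only [dz, fderiv_fun_mul hf hg, _root_.add_apply, _root_.smul_apply, smul_eq_mul]
  ring

lemma dz_apply (l k : Fin n) : dz (fun w : Fin n → ℂ ↦ w k) l z = if l = k then 1 else 0 := by
  have hproj : fderiv ℝ (fun w : Fin n → ℂ ↦ w k) z =
      ContinuousLinearMap.proj (R := ℝ) (φ := fun _ : Fin n ↦ ℂ) k :=
    (ContinuousLinearMap.proj (R := ℝ) (φ := fun _ : Fin n ↦ ℂ) k).fderiv
  rcases eq_or_ne l k with rfl | h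
  · simp only [dz, hproj, ContinuousLinearMap.proj_apply, Pi.single_eq_same, Complex.I_mul_I,
      if_true]
    norm_num
  · simp [dz, hproj, h, h.symm]

lemma dzbar_ofReal {f : (Fin n → ℂ) → ℝ} (hf : DifferentiableAt ℝ f z) (k : Fin n) :
    dzbar (fun w ↦ (f w : ℂ)) k z = star (dz (fun w ↦ (f w : ℂ)) k z) := by
  simp [dz, dzbar, fderiv_ofReal_apply hf]

lemma dz_ofReal_add {f g : (Fin n → ℂ) → ℝ} (hf : DifferentiableAt ℝ f z)
    (hg : DifferentiableAt ℝ g z) (k : Fin n) :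
    dz (fun w ↦ ((f w + g w : ℝ) : ℂ)) k z =
      dz (fun w ↦ (f w : ℂ)) k z + dz (fun w ↦ (g w : ℂ)) k z := by
  simp only [Complex.ofReal_add]
  exact dz_add (differentiableAt_ofReal hf) (differentiableAt_ofReal hg) k

lemma dz_ofReal_comp {f : (Fin n → ℂ) → ℝ} {χ : ℝ → ℝ} {χ' : ℝ}
    (hχ : HasDerivAt χ χ' (f z)) (hf : DifferentiableAt ℝ f z) (k : Fin n) :
    dz (fun w ↦ (χ (f w) : ℂ)) k z = χ' * dz (fun w ↦ (f w : ℂ)) k z := by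
  have h := hχ.comp_hasFDerivAt z hf.hasFDerivAt
  have hfderiv : fderiv ℝ (fun w ↦ χ (f w)) z = χ' • fderiv ℝ f z := h.fderiv
  have hd : DifferentiableAt ℝ (fun w ↦ χ (f w)) z := h.differentiableAt
  simp only [dz, fderiv_ofReal_apply hd, fderiv_ofReal_apply hf, hfderiv, _root_.smul_apply,
    smul_eq_mul, Complex.ofReal_mul]
  ring

lemma differentiableAt_dzbar_ofReal {f : (Fin n → ℂ) → ℝ} (hf : ContDiffAt ℝ 2 f z)
    (k : Fin n) : DifferentiableAt ℝ (dzbar (fun w ↦ (f w : ℂ)) k) z := by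
  have hf' : ContDiffAt ℝ 2 (fun w ↦ (f w : ℂ)) z :=
    Complex.ofRealCLM.contDiff.contDiffAt.comp z hf
  have hfderiv : DifferentiableAt ℝ (fderiv ℝ fun w ↦ (f w : ℂ)) z :=
    (hf'.fderiv_right (m := 1) (by norm_num)).differentiableAt one_ne_zero
  unfold dzbar
  fun_prop

lemma hessW_congr {f g : (Fin n → ℂ) → ℝ} (h : f =ᶠ[nhds z] g) (l k : Fin n) :
    hessW f l k z = hessW g l k z := by
  refine dz_congr ?_ l
  filter_upwards [h.eventuallyEq_nhds] with w hw
  have hwℂ : (fun y ↦ (f y : ℂ)) =ᶠ[nhds w] fun y ↦ (g y : ℂ) := hw.fun_comp Complex.ofReal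
  simp only [dzbar, hwℂ.fderiv_eq]

lemma hessW_add {f g : (Fin n → ℂ) → ℝ} (hf : ContDiffAt ℝ 2 f z) (hg : ContDiffAt ℝ 2 g z)
    (l k : Fin n) :
    hessW (fun w ↦ f w + g w) l k z = hessW f l k z + hessW g l k z := by
  rw [hessW, hessW, hessW,
    ← dz_add (differentiableAt_dzbar_ofReal hf k) (differentiableAt_dzbar_ofReal hg k)]
  refine dz_congr ?_ l
  filter_upwards [eventually_differentiableAt hf, eventually_differentiableAt hg] with w hfw hgw
  rw [dzbar_ofReal (hfw.fun_add hgw), dz_ofReal_add hfw hgw, star_add, dzbar_ofReal hfw,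
    dzbar_ofReal hgw]

lemma hessW_comp {f : (Fin n → ℂ) → ℝ} {χ χ' : ℝ → ℝ} {χ'' : ℝ} (hf : ContDiffAt ℝ 2 f z)
    (hχ : ∀ᶠ x in nhds (f z), HasDerivAt χ (χ' x) x) (hχ' : HasDerivAt χ' χ'' (f z))
    (l k : Fin n) :
    hessW (fun w ↦ χ (f w)) l k z =
      χ' (f z) * hessW f l k z +
        χ'' * (dz (fun w ↦ (f w : ℂ)) l z * star (dz (fun w ↦ (f w : ℂ)) k z)) := by
  have hfz : DifferentiableAt ℝ f z := hf.differentiableAt two_ne_zero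
  have hfst : (fun w ↦ dzbar (fun y ↦ (χ (f y) : ℂ)) k w) =ᶠ[nhds z]
      fun w ↦ (χ' (f w) : ℂ) * dzbar (fun y ↦ (f y : ℂ)) k w := by
    filter_upwards [eventually_differentiableAt hf, hf.continuousAt.eventually hχ] with w hfw hχw
    rw [dzbar_ofReal (f := fun w ↦ χ (f w)) (hχw.differentiableAt.comp w hfw),
      dz_ofReal_comp hχw hfw, dzbar_ofReal hfw]
    simp
  rw [hessW, dz_congr hfst, dz_mul
    (differentiableAt_ofReal (f := fun w ↦ χ' (f w)) (hχ'.differentiableAt.comp z hfz))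
    (differentiableAt_dzbar_ofReal hf k), dz_ofReal_comp hχ' hfz, dzbar_ofReal hfz, ← hessW]
  ring

/-- The squared Hermitian norm `|z|² = ∑ₖ |zₖ|²`, the plurisubharmonic weight; the norm that
Mathlib puts on `Fin n → ℂ` is the supremum norm. -/
noncomputable def sqNorm (z : Fin n → ℂ) : ℝ :=
  ∑ k, ‖z k‖ ^ 2

lemma contDiff_sqNorm {m : WithTop ℕ∞} : ContDiff ℝ m (sqNorm (n := n)) :=
  ContDiff.sum fun i _ ↦ (contDiff_apply ℝ ℂ i).norm_sq ℝ

lemma differentiableAt_sqNorm : DifferentiableAt ℝ sqNorm z :=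
  contDiff_sqNorm.differentiable one_ne_zero z

lemma fderiv_sqNorm_single (z : Fin n → ℂ) (k : Fin n) (a : ℂ) :
    fderiv ℝ sqNorm z (Pi.single k a) = 2 * inner ℝ (z k) a := by
  have hcoord (j : Fin n) : HasFDerivAt (fun w : Fin n → ℂ ↦ ‖w j‖ ^ 2) _ z :=
    (ContinuousLinearMap.proj (R := ℝ) (φ := fun _ : Fin n ↦ ℂ) j).hasFDerivAt.norm_sq
  have hsum : HasFDerivAt sqNorm _ z := HasFDerivAt.fun_sum fun j _ ↦ hcoord j
  rw [hsum.fderiv, _root_.sum_apply, Finset.sum_eq_single k]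
  · simp only [_root_.smul_apply, ContinuousLinearMap.comp_apply, ContinuousLinearMap.proj_apply,
      innerSL_apply_apply, Pi.single_eq_same, nsmul_eq_mul, Nat.cast_ofNat]
  · intro j _ hj
    simp [hj]
  · simp

lemma dzbar_sqNorm (k : Fin n) : dzbar (fun w ↦ (sqNorm w : ℂ)) k z = z k := by
  rw [dzbar, fderiv_ofReal_apply differentiableAt_sqNorm,
    fderiv_ofReal_apply differentiableAt_sqNorm, fderiv_sqNorm_single, fderiv_sqNorm_single]
  apply Complex.ext <;> simp [Complex.inner]

lemma dz_sqNorm (k : Fin n) : dz (fun w ↦ (sqNorm w : ℂ)) k z = star (z k) := by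
  rw [← dzbar_sqNorm (z := z) k, dzbar_ofReal differentiableAt_sqNorm, star_star]

lemma hessW_sqNorm (l k : Fin n) : hessW sqNorm l k z = if l = k then 1 else 0 := by
  simp only [hessW, dzbar_sqNorm, dz_apply]

end Wirtinger

section HessianForm

variable {n q : ℕ} {u : (Fin q → Fin n) → ℂ} {z : Fin n → ℂ}

/-- The gradient form `i∂f ∧ ∂̄f(u,u) = ∑'_{|J|=q-1} |∑ₗ ∂f/∂zₗ · u_{lJ}|²`, the rank-one
companion of `hForm` in the chain rule. It is real-valued, whereas `hForm` takes complex
values. -/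
noncomputable def gradForm (q : ℕ) (f : (Fin n → ℂ) → ℝ) (u : (Fin q → Fin n) → ℂ)
    (z : Fin n → ℂ) : ℝ :=
  ∑ J ∈ Incr n (q - 1), ‖∑ l, dz (fun w ↦ (f w : ℂ)) l z * u (cons' q l J)‖ ^ 2

lemma sum_mul_star_mul_star {ι : Type*} [Fintype ι] (a v : ι → ℂ) :
    ∑ k, ∑ l, a l * star (a k) * v l * star (v k) = ((‖∑ l, a l * v l‖ ^ 2 : ℝ) : ℂ) := by
  rw [← Complex.normSq_eq_norm_sq, ← Complex.mul_conj, map_sum, Finset.sum_mul_sum,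
    Finset.sum_comm]
  refine Finset.sum_congr rfl fun l _ ↦ Finset.sum_congr rfl fun k _ ↦ ?_
  simp only [map_mul, starRingEnd_apply]
  ring

lemma hForm_congr {f g : (Fin n → ℂ) → ℝ} (h : f =ᶠ[nhds z] g) :
    hForm q f u z = hForm q g u z := by
  simp only [hForm, hessW_congr h]

lemma hForm_add {f g : (Fin n → ℂ) → ℝ} (hf : ContDiffAt ℝ 2 f z) (hg : ContDiffAt ℝ 2 g z) :
    hForm q (fun w ↦ f w + g w) u z = hForm q f u z + hForm q g u z := by
  simp only [hForm, hessW_add hf hg, add_mul, Finset.sum_add_distrib]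

lemma hForm_comp {f : (Fin n → ℂ) → ℝ} {χ χ' : ℝ → ℝ} {χ'' : ℝ} (hf : ContDiffAt ℝ 2 f z)
    (hχ : ∀ᶠ x in nhds (f z), HasDerivAt χ (χ' x) x) (hχ' : HasDerivAt χ' χ'' (f z)) :
    hForm q (fun w ↦ χ (f w)) u z = χ' (f z) * hForm q f u z + χ'' * gradForm q f u z := by
  simp only [hForm, gradForm, hessW_comp hf hχ hχ', Complex.ofReal_sum, ← sum_mul_star_mul_star,
    Finset.mul_sum, ← Finset.sum_add_distrib]
  refine Finset.sum_congr rfl fun J _ ↦ Finset.sum_congr rfl fun k _ ↦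
    Finset.sum_congr rfl fun l _ ↦ ?_
  ring

lemma hForm_const_mul {f : (Fin n → ℂ) → ℝ} (hf : ContDiffAt ℝ 2 f z) (c : ℝ) :
    hForm q (fun w ↦ c * f w) u z = c * hForm q f u z := by
  have hχ (x : ℝ) : HasDerivAt (fun y ↦ c * y) c x := by
    simpa using (hasDerivAt_id x).const_mul c
  simpa using hForm_comp (q := q) (u := u) hf (.of_forall hχ) (hasDerivAt_const _ c)

lemma hForm_sqNorm :
    hForm q sqNorm u z = ((∑ J ∈ Incr n (q - 1), ∑ l, ‖u (cons' q l J)‖ ^ 2 : ℝ) : ℂ) := by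
  simp [hForm, hessW_sqNorm, Complex.mul_conj, Complex.normSq_eq_norm_sq]

lemma gradForm_comp {f : (Fin n → ℂ) → ℝ} {χ : ℝ → ℝ} {χ' : ℝ}
    (hχ : HasDerivAt χ χ' (f z)) (hf : DifferentiableAt ℝ f z) :
    gradForm q (fun w ↦ χ (f w)) u z = χ' ^ 2 * gradForm q f u z := by
  simp [gradForm, dz_ofReal_comp hχ hf, mul_assoc, ← Finset.mul_sum, mul_pow]

lemma gradForm_const_mul {f : (Fin n → ℂ) → ℝ} (hf : DifferentiableAt ℝ f z) (c : ℝ) :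
    gradForm q (fun w ↦ c * f w) u z = c ^ 2 * gradForm q f u z :=
  gradForm_comp (by simpa using (hasDerivAt_id (f z)).const_mul c) hf

lemma gradForm_sqNorm_le :
    gradForm q sqNorm u z ≤ sqNorm z * ∑ J ∈ Incr n (q - 1), ∑ l, ‖u (cons' q l J)‖ ^ 2 := by
  rw [gradForm, Finset.mul_sum]
  refine Finset.sum_le_sum fun J _ ↦ ?_
  calc ‖∑ l, dz (fun w ↦ (sqNorm w : ℂ)) l z * u (cons' q l J)‖ ^ 2
      ≤ (∑ l, ‖z l‖ * ‖u (cons' q l J)‖) ^ 2 := by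
        gcongr
        simpa [dz_sqNorm] using
          norm_sum_le Finset.univ fun l ↦ star (z l) * u (cons' q l J)
    _ ≤ sqNorm z * ∑ l, ‖u (cons' q l J)‖ ^ 2 := Finset.sum_mul_sq_le_sq_mul_sq _ _ _

lemma mul_norm_add_sq_le {E : Type*} [SeminormedAddCommGroup E] {s : ℝ}
    (hs : s ∈ Set.Ioo (0 : ℝ) 1) (a b : E) :
    s * ‖a + b‖ ^ 2 ≤ ‖a‖ ^ 2 + s / (1 - s) * ‖b‖ ^ 2 := by
  obtain ⟨hs0, hs1⟩ := hs
  have : 0 < 1 - s := sub_pos.2 hs1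
  calc s * ‖a + b‖ ^ 2 ≤ s * (‖a‖ + ‖b‖) ^ 2 := by gcongr; exact norm_add_le a b
    _ = ‖a‖ ^ 2 + s / (1 - s) * ‖b‖ ^ 2 - ((1 - s) * ‖a‖ - s * ‖b‖) ^ 2 / (1 - s) := by
        field_simp
        ring
    _ ≤ ‖a‖ ^ 2 + s / (1 - s) * ‖b‖ ^ 2 := sub_le_self _ (by positivity)

lemma mul_gradForm_add_le {f g : (Fin n → ℂ) → ℝ} (hf : DifferentiableAt ℝ f z)
    (hg : DifferentiableAt ℝ g z) {s : ℝ} (hs : s ∈ Set.Ioo (0 : ℝ) 1) :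
    s * gradForm q (fun w ↦ f w + g w) u z ≤
      gradForm q f u z + s / (1 - s) * gradForm q g u z := by
  simp only [gradForm, dz_ofReal_add hf hg, add_mul, Finset.mul_sum, Finset.sum_add_distrib]
  rw [← Finset.sum_add_distrib]
  exact Finset.sum_le_sum fun J _ ↦ mul_norm_add_sq_le hs _ _

lemma hForm_log_neg {ρ : (Fin n → ℂ) → ℝ} (hρ : ContDiffAt ℝ 2 ρ z) (hneg : ρ z < 0) :
    hForm q (fun w ↦ Real.log (-ρ w)) u z =
      ((ρ z)⁻¹ : ℝ) * hForm q ρ u z - gradForm q (fun w ↦ Real.log (-ρ w)) u z := by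
  simp only [Real.log_neg_eq_log]
  have hlog : ∀ᶠ x in nhds (ρ z), HasDerivAt Real.log x⁻¹ x :=
    (eventually_ne_nhds hneg.ne).mono fun _ ↦ Real.hasDerivAt_log
  rw [hForm_comp hρ hlog (hasDerivAt_inv hneg.ne),
    gradForm_comp hlog.self_of_nhds (hρ.differentiableAt two_ne_zero)]
  push_cast
  ring

lemma hForm_neg_exp_mul {f : (Fin n → ℂ) → ℝ} (hf : ContDiffAt ℝ 2 f z) (s : ℝ) :
    hForm q (fun w ↦ -Real.exp (s * f w)) u z =
      (s * Real.exp (s * f z) : ℝ) * (-hForm q f u z - s * gradForm q f u z) := by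
  have hexp (x : ℝ) : HasDerivAt (fun y ↦ Real.exp (s * y)) (s * Real.exp (s * x)) x := by
    simpa [mul_comm] using ((hasDerivAt_id x).const_mul s).exp
  rw [hForm_comp (χ := fun x ↦ -Real.exp (s * x)) (χ' := fun x ↦ -(s * Real.exp (s * x))) hf
    (.of_forall fun x ↦ (hexp x).neg) ((hexp (f z)).const_mul s).neg]
  push_cast
  ring

lemma neg_exp_mul_rpow {x : ℝ} (hx : x < 0) (a s : ℝ) :
    (-(Real.exp a * x)) ^ s = Real.exp (s * (Real.log (-x) + a)) := by
  rw [← mul_neg, Real.mul_rpow (Real.exp_pos a).le (neg_pos.2 hx).le,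
    Real.rpow_def_of_pos (neg_pos.2 hx), ← Real.exp_mul, ← Real.exp_add]
  ring_nf

lemma le_re_hForm_neg_rpow {ρ ψ : (Fin n → ℂ) → ℝ} (hρ : ContDiffAt ℝ 2 ρ z) (hneg : ρ z < 0)
    (hpsh : 0 ≤ (hForm q ρ u z).re) (hψ : ContDiffAt ℝ 2 ψ z) {s : ℝ}
    (hs : s ∈ Set.Ioo (0 : ℝ) 1) :
    s * (-(Real.exp (ψ z) * ρ z)) ^ s *
        (-(hForm q ψ u z).re - s / (1 - s) * gradForm q ψ u z) ≤
      (hForm q (fun w ↦ -(-(Real.exp (ψ w) * ρ w)) ^ s) u z).re := by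
  have hlog : ContDiffAt ℝ 2 (fun w ↦ Real.log (-ρ w)) z := hρ.neg.log (neg_pos.2 hneg).ne'
  have hexp : (fun w ↦ -(-(Real.exp (ψ w) * ρ w)) ^ s) =ᶠ[nhds z]
      fun w ↦ -Real.exp (s * (Real.log (-ρ w) + ψ w)) :=
    (hρ.continuousAt.eventually_lt_const hneg).mono fun w hw ↦
      congrArg Neg.neg (neg_exp_mul_rpow hw (ψ w) s)
  have hgrad := mul_gradForm_add_le (q := q) (u := u) (hlog.differentiableAt two_ne_zero)
    (hψ.differentiableAt two_ne_zero) hs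
  have hρform : (ρ z)⁻¹ * (hForm q ρ u z).re ≤ 0 :=
    mul_nonpos_of_nonpos_of_nonneg (inv_nonpos.2 hneg.le) hpsh
  rw [hForm_congr hexp, hForm_neg_exp_mul (hlog.add hψ), hForm_add hlog hψ,
    hForm_log_neg hρ hneg, neg_exp_mul_rpow hneg]
  simp only [Complex.re_ofReal_mul, Complex.sub_re, Complex.neg_re, Complex.add_re,
    Complex.ofReal_re]
  exact mul_le_mul_of_nonneg_left (by linarith) (mul_nonneg hs.1.le (Real.exp_pos _).le)

lemma le_re_hForm_neg_rpow_sqNorm {ρ : (Fin n → ℂ) → ℝ} (hq : 1 ≤ q) (hu : IsCoeff u)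
    (hρ : ContDiffAt ℝ 2 ρ z) (hneg : ρ z < 0) (hpsh : 0 ≤ (hForm q ρ u z).re) {s : ℝ}
    (hs : s ∈ Set.Ioo (0 : ℝ) 1) (K : ℝ) :
    s * (-(Real.exp (-K * sqNorm z) * ρ z)) ^ s *
        ((K - s / (1 - s) * K ^ 2 * sqNorm z) * (q * nSq u)) ≤
      (hForm q (fun w ↦ -(-(Real.exp (-K * sqNorm w) * ρ w)) ^ s) u z).re := by
  have hbase : 0 ≤ -(Real.exp (-K * sqNorm z) * ρ z) :=
    neg_nonneg.2 (mul_nonpos_of_nonneg_of_nonpos (Real.exp_pos _).le hneg.le)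
  have hform : -(hForm q (fun w ↦ -K * sqNorm w) u z).re = K * (q * nSq u) := by
    rw [hForm_const_mul contDiff_sqNorm.contDiffAt, hForm_sqNorm, hu.sum_norm_sq_cons' hq,
      ← Complex.ofReal_mul, Complex.ofReal_re, neg_mul, neg_neg]
  have hgrad : gradForm q (fun w ↦ -K * sqNorm w) u z ≤ K ^ 2 * (sqNorm z * (q * nSq u)) := by
    rw [gradForm_const_mul differentiableAt_sqNorm, neg_sq, ← hu.sum_norm_sq_cons' hq]
    gcongr
    exact gradForm_sqNorm_le
  refine le_trans ?_ (le_re_hForm_neg_rpow hρ hneg hpsh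
    (contDiff_const.mul contDiff_sqNorm).contDiffAt hs)
  refine mul_le_mul_of_nonneg_left ?_ (mul_nonneg hs.1.le (Real.rpow_nonneg hbase s))
  rw [hform]
  have hcoeff : 0 ≤ s / (1 - s) := div_nonneg hs.1.le (sub_pos.2 hs.2).le
  linarith [mul_le_mul_of_nonneg_left hgrad hcoeff]

end HessianForm

end HM

/-- Taking `c = n` gives the weight of the paper; `c = 1` gives a constant independent of the
dimension. -/
theorem diederich_fornaess_bound_general {n q : ℕ} (hq : 1 ≤ q) {z : Fin n → ℂ}
    {ρ : (Fin n → ℂ) → ℝ} (hρ : ContDiffAt ℝ 2 ρ z) (hneg : ρ z < 0)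
    {u : (Fin q → Fin n) → ℂ} (hu : HM.IsCoeff u) (hpsh : 0 ≤ (HM.hForm q ρ u z).re)
    {s : ℝ} (hs : s ∈ Set.Ioo (0 : ℝ) 1) {D : ℝ} (hD : 0 < D)
    (hz : ∑ k, ‖z k‖ ^ 2 ≤ D) {c : ℝ} (hc : 1 ≤ c) :
    let K := (1 - s) / (2 * D * c * s)
    let r := fun w : Fin n → ℂ ↦ Real.exp (-K * ∑ k, ‖w k‖ ^ 2) * ρ w
    ((1 - s) * q / (4 * D * c)) * (-(r z)) ^ s * HM.nSq u ≤
      (HM.hForm q (fun w ↦ -((-(r w)) ^ s)) u z).re := by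
  intro K r
  have hs0 : 0 < s := hs.1
  have : 0 < 1 - s := sub_pos.2 hs.2
  have : 0 < c := one_pos.trans_le hc
  have hr : 0 ≤ (-(r z)) ^ s := Real.rpow_nonneg
    (neg_nonneg.2 (mul_nonpos_of_nonneg_of_nonpos (Real.exp_pos _).le hneg.le)) s
  have hnSq : 0 ≤ HM.nSq u := Finset.sum_nonneg fun I _ ↦ sq_nonneg ‖u I‖
  have hquad : s / (1 - s) * K ^ 2 * HM.sqNorm z ≤ K / 2 := by
    calc s / (1 - s) * K ^ 2 * HM.sqNorm z ≤ s / (1 - s) * K ^ 2 * D := by gcongr; exact hz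
      _ = K / 2 / c := by simp only [K]; field_simp
      _ ≤ K / 2 := div_le_self (by positivity) hc
  calc (1 - s) * q / (4 * D * c) * (-(r z)) ^ s * HM.nSq u
      = s * (-(r z)) ^ s * ((K - K / 2) * (q * HM.nSq u)) := by
        simp only [K]
        field_simp
        ring
    _ ≤ s * (-(r z)) ^ s * ((K - s / (1 - s) * K ^ 2 * HM.sqNorm z) * (q * HM.nSq u)) := by
        gcongr
    _ ≤ (HM.hForm q (fun w ↦ -((-(r w)) ^ s)) u z).re :=
        HM.le_re_hForm_neg_rpow_sqNorm hq hu hρ hneg hpsh hs K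

/-- the Diederich–Fornæss type lemma (Lemma 3.2): with
`K = (1−s)/(2Dns)` and `r = e^{−K|z|²}ρ`, one has
`i∂∂̄(−(−r)^s)(u,u) ≥ ((1−s)q/(4Dn))·(−r)^s·|u|²` on `Ω`. -/
theorem diederich_fornaess_bound (n q : ℕ) (hn : 1 ≤ n) (hq1 : 1 ≤ q) (hqn : q ≤ n)
    (Ω U : Set (Fin n → ℂ)) (hΩo : IsOpen Ω) (hΩb : Bornology.IsBounded Ω)
    (D : ℝ) (hD : 0 < D) (hDbound : ∀ z ∈ closure Ω, ∑ k : Fin n, ‖z k‖ ^ 2 ≤ D)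
    (hU : IsOpen U) (hcl : closure Ω ⊆ U)
    (ρ : (Fin n → ℂ) → ℝ) (hρ : ContDiffOn ℝ 2 ρ U)
    (hρneg : ∀ z ∈ Ω, ρ z < 0)
    (hρpsh : ∀ z ∈ closure Ω, ∀ u : (Fin q → Fin n) → ℂ, HM.IsCoeff u →
      0 ≤ (HM.hForm q ρ u z).re)
    (s : ℝ) (hs : s ∈ Set.Ioo (0 : ℝ) 1)
    (K : ℝ) (hK : K = (1 - s) / (2 * D * n * s))
    (r : (Fin n → ℂ) → ℝ)
    (hr : ∀ z, r z = Real.exp (-K * ∑ k : Fin n, ‖z k‖ ^ 2) * ρ z) :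
    ∀ z ∈ Ω, ∀ u : (Fin q → Fin n) → ℂ, HM.IsCoeff u →
      ((1 - s) * q / (4 * D * n)) * (-(r z)) ^ s * HM.nSq u ≤
        (HM.hForm q (fun w => -((-(r w)) ^ s)) u z).re := by
  obtain rfl : r = _ := funext hr
  subst hK
  exact fun z hz u hu ↦ diederich_fornaess_bound_general hq1
    (hρ.contDiffAt (hU.mem_nhds (hcl (subset_closure hz)))) (hρneg z hz) hu
    (hρpsh z (subset_closure hz) u hu) hs hD (hDbound z (subset_closure hz))
    (Nat.one_le_cast.2 hn)
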